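/- In the minimalistic affine super Yangian Y_ℏ(ŝl(m|n,Π)) with recursively defined higher generators: (1) [x^+_{α_i,r}, x^−_{α_i,s}] = h_{α_i,r+s} holds for all i whenever r + s ≤ 2; (2) for i ≠ j and all r, s ≥ 0, [x^+_{α_i,r}, x^−_{α_j,s}] = 0 and [x^±_{α_i,r+1}, x^±_{α_j,s}] − [x^±_{α_i,r}, x^±_{α_j,s+1}] = ± (ℏ a_{ij}/2) {x^±_{α_i,r}, x^±_{α_j,s}}. -/

import Mathlib

/-!
Common framework for formalizing statements about affine super Yangians
`Y_ℏ(ŝl(m|n,Π))` attached to a simple root system `Π` of the affine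
Kac–Moody superalgebra `ŝl(m|n)` of type `A^{(1)}(m−1|n−1)`.
-/

noncomputable section

namespace ASY

open scoped TensorProduct

/-- The ground ring `ℂ[ℏ]`. -/
abbrev R : Type := Polynomial ℂ

/-- The formal deformation parameter `ℏ`. -/
def hbar : R := Polynomial.X

/-- `1/2` as an element of `ℂ[ℏ]`. -/
def half : R := Polynomial.C (1/2 : ℂ)

/-- The sign `(−1)^{p(a)p(b)}` attached to parities `pa`, `pb`. -/
def sg (pa pb : Bool) : R := if pa && pb then -1 else 1

section SuperOps

variable {Y : Type*} [Ring Y] [Algebra R Y]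

/-- The supercommutator `[a,b] = ab − (−1)^{p(a)p(b)} ba` of homogeneous elements of
parities `pa` and `pb`. -/
def sbr (pa pb : Bool) (x y : Y) : Y := x * y - sg pa pb • (y * x)

/-- The super anticommutator `{a,b} = ab + (−1)^{p(a)p(b)} ba`. -/
def sac (pa pb : Bool) (x y : Y) : Y := x * y + sg pa pb • (y * x)

/-- Iterated super-adjoint action `(ad x)^k y` for `x` of parity `pa` and `y` of parity `pb`. -/
def adN (pa pb : Bool) (x : Y) : ℕ → Y → Y
  | 0, y => y
  | k + 1, y => sbr pa (xor pb (pa && decide (k % 2 = 1))) x (adN pa pb x k y)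

/-- Iterated super-bracket `[x₁,[x₂,…,[x_k, y]…]]`, all `xᵢ` of parity `pa`, `y` of parity `pb`. -/
def adSeq (pa pb : Bool) : List Y → Y → Y
  | [], y => y
  | x :: l, y => sbr pa (xor pb (pa && decide (l.length % 2 = 1))) x (adSeq pa pb l y)

end SuperOps

/-- A simple root system `Π` of the affine Kac–Moody superalgebra `ŝl(m|n)`
(type `A^{(1)}(m−1|n−1)`): a cyclic arrangement of the `m + n` weights
`ε₁,…,ε_m, δ₁,…,δ_n`, recorded by the type of the weight at each position
(`false` = an `ε`-weight of norm `+1`, `true` = a `δ`-weight of norm `−1`);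
the simple roots are `α_i = e_i − e_{i+1}` (indices mod `m+n`). -/
structure SimpleRootSystem (m n : ℕ) : Type where
  /-- the type of the weight at each position -/
  τ : Fin (m + n) → Bool
  /-- there are exactly `n` weights of `δ`-type -/
  card_delta : (Finset.univ.filter fun k => τ k = true).card = n

namespace SimpleRootSystem

variable {m n : ℕ}

/-- The norm `(e_k, e_k) = ±1` of the `k`-th weight. -/
def w (P : SimpleRootSystem m n) (k : Fin (m + n)) : ℤ := if P.τ k then -1 else 1

variable [NeZero (m + n)]

/-- The coefficient of `e_k` in the simple root `α_i = e_i − e_{i+1}`. -/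
def coeffα (i k : Fin (m + n)) : ℤ := (if k = i then 1 else 0) - (if k = i + 1 then 1 else 0)

/-- The (symmetric) Cartan matrix `a_{ij} = (α_i, α_j)` of `Π`. -/
def a (P : SimpleRootSystem m n) (i j : Fin (m + n)) : ℤ :=
  ∑ k, P.w k * coeffα i k * coeffα j k

/-- The parity of the simple root `α_i` (`true` iff `α_i` is odd, iff `a_{ii} = 0`). -/
def par (P : SimpleRootSystem m n) (i : Fin (m + n)) : Bool := P.τ i != P.τ (i + 1)

/-- The reflection `s_{α_i}` on simple root systems: on the weight arrangement it
swaps the weights at positions `i` and `i+1`.  For `α_i` even it preserves `Π`;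
for `α_i` odd it is the odd reflection `Π ↦ Π₁`. -/
def reflect (P : SimpleRootSystem m n) (i : Fin (m + n)) : SimpleRootSystem m n where
  τ := P.τ ∘ Equiv.swap i (i + 1)
  card_delta := by
    have h1 : (Finset.univ.filter fun k => (P.τ ∘ Equiv.swap i (i + 1)) k = true).card
        = (Finset.univ.filter fun k => P.τ k = true).card :=
      Finset.card_equiv (Equiv.swap i (i + 1)) (fun k => by simp)
    rw [h1, P.card_delta]

/-- Applying a word of simple reflections to a simple root system. -/
def applyWord (P : SimpleRootSystem m n) : List (Fin (m + n)) → SimpleRootSystem m n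
  | [] => P
  | c :: l => applyWord (P.reflect c) l

/-- The word consists of even reflections at every stage (i.e. it represents an
element of the Weyl group, generated by even reflections). -/
def IsEvenWord (P : SimpleRootSystem m n) : List (Fin (m + n)) → Prop
  | [] => True
  | c :: l => P.par c = false ∧ IsEvenWord (P.reflect c) l

end SimpleRootSystem

end ASY

namespace ASY

/-- Generators of the minimalistic affine super Yangian: `x^±_{α_i,r}`, `h_{α_i,r}`
with `i ∈ I` and `r ∈ {0,1}`. -/
inductive MGen (N : ℕ) : Type
  | xp (i : Fin N) (r : Fin 2)
  | xm (i : Fin N) (r : Fin 2)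
  | h (i : Fin N) (r : Fin 2)

/-- The free algebra on the minimalistic generators. -/
abbrev MFree (m n : ℕ) : Type := FreeAlgebra R (MGen (m + n))

section MinDefs

variable {m n : ℕ}

/-- `x^+_{α_i,r}` in the free algebra. -/
def MXp (i : Fin (m + n)) (r : Fin 2) : MFree m n := FreeAlgebra.ι R (MGen.xp i r)

/-- `x^−_{α_i,r}` in the free algebra. -/
def MXm (i : Fin (m + n)) (r : Fin 2) : MFree m n := FreeAlgebra.ι R (MGen.xm i r)

/-- `h_{α_i,r}` in the free algebra. -/
def MH (i : Fin (m + n)) (r : Fin 2) : MFree m n := FreeAlgebra.ι R (MGen.h i r)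

/-- `h̃_{α_i,1} = h_{α_i,1} − (ℏ/2) h_{α_i,0}²` in the free algebra. -/
def MHt (i : Fin (m + n)) : MFree m n := MH i 1 - (half * hbar) • (MH i 0 * MH i 0)

variable [NeZero (m + n)]

/-- The defining relations of the minimalistic affine super Yangian `Y_ℏ(ŝl(m|n,Π))`. -/
inductive MRel (P : SimpleRootSystem m n) : MFree m n → MFree m n → Prop
  /-- `[h_{α_i,r}, h_{α_j,s}] = 0` -/
  | hh (i j : Fin (m + n)) (r s : Fin 2) :
      MRel P (sbr false false (MH i r) (MH j s)) 0
  /-- `[x^+_{α_i,0}, x^−_{α_j,0}] = δ_{ij} h_{α_i,0}` -/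
  | pm00 (i j : Fin (m + n)) :
      MRel P (sbr (P.par i) (P.par j) (MXp i 0) (MXm j 0)) (if i = j then MH i 0 else 0)
  /-- `[x^+_{α_i,1}, x^−_{α_j,0}] = δ_{ij} h_{α_i,1}` -/
  | pm10 (i j : Fin (m + n)) :
      MRel P (sbr (P.par i) (P.par j) (MXp i 1) (MXm j 0)) (if i = j then MH i 1 else 0)
  /-- `[x^+_{α_i,0}, x^−_{α_j,1}] = δ_{ij} h_{α_i,1}` -/
  | pm01 (i j : Fin (m + n)) :
      MRel P (sbr (P.par i) (P.par j) (MXp i 0) (MXm j 1)) (if i = j then MH i 1 else 0)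
  /-- `[h_{α_i,0}, x^+_{α_j,r}] = a_{ij} x^+_{α_j,r}` -/
  | hxp (i j : Fin (m + n)) (r : Fin 2) :
      MRel P (sbr false (P.par j) (MH i 0) (MXp j r)) (((P.a i j : ℤ) : R) • MXp j r)
  /-- `[h_{α_i,0}, x^−_{α_j,r}] = −a_{ij} x^−_{α_j,r}` -/
  | hxm (i j : Fin (m + n)) (r : Fin 2) :
      MRel P (sbr false (P.par j) (MH i 0) (MXm j r)) ((-(P.a i j : ℤ) : R) • MXm j r)
  /-- `[x^+_{α_i,1},x^+_{α_j,0}] − [x^+_{α_i,0},x^+_{α_j,1}] = (ℏ a_{ij}/2){x^+_{α_i,0},x^+_{α_j,0}}` -/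
  | mixp (i j : Fin (m + n)) :
      MRel P (sbr (P.par i) (P.par j) (MXp i 1) (MXp j 0)
          - sbr (P.par i) (P.par j) (MXp i 0) (MXp j 1))
        ((half * hbar * ((P.a i j : ℤ) : R)) • sac (P.par i) (P.par j) (MXp i 0) (MXp j 0))
  /-- `[x^−_{α_i,1},x^−_{α_j,0}] − [x^−_{α_i,0},x^−_{α_j,1}] = −(ℏ a_{ij}/2){x^−_{α_i,0},x^−_{α_j,0}}` -/
  | mixm (i j : Fin (m + n)) :
      MRel P (sbr (P.par i) (P.par j) (MXm i 1) (MXm j 0)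
          - sbr (P.par i) (P.par j) (MXm i 0) (MXm j 1))
        ((-(half * hbar * ((P.a i j : ℤ) : R))) • sac (P.par i) (P.par j) (MXm i 0) (MXm j 0))
  /-- `[h̃_{α_i,1}, x^+_{α_j,0}] = a_{ij} x^+_{α_j,1}` -/
  | htxp (i j : Fin (m + n)) :
      MRel P (sbr false (P.par j) (MHt i) (MXp j 0)) (((P.a i j : ℤ) : R) • MXp j 1)
  /-- `[h̃_{α_i,1}, x^−_{α_j,0}] = −a_{ij} x^−_{α_j,1}` -/
  | htxm (i j : Fin (m + n)) :
      MRel P (sbr false (P.par j) (MHt i) (MXm j 0)) ((-(P.a i j : ℤ) : R) • MXm j 1)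
  /-- Serre relation `(ad x^+_{α_i,0})^{1+|a_{ij}|}(x^+_{α_j,0}) = 0`, `i ≠ j` -/
  | serrep (i j : Fin (m + n)) (hij : i ≠ j) :
      MRel P (adN (P.par i) (P.par j) (MXp i 0) (1 + (P.a i j).natAbs) (MXp j 0)) 0
  /-- Serre relation `(ad x^−_{α_i,0})^{1+|a_{ij}|}(x^−_{α_j,0}) = 0`, `i ≠ j` -/
  | serrem (i j : Fin (m + n)) (hij : i ≠ j) :
      MRel P (adN (P.par i) (P.par j) (MXm i 0) (1 + (P.a i j).natAbs) (MXm j 0)) 0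
  /-- `[x^+_{α_t,0}, x^+_{α_t,0}] = 0` for `α_t` odd -/
  | oddp (t : Fin (m + n)) (ht : P.par t = true) :
      MRel P (sbr true true (MXp t 0) (MXp t 0)) 0
  /-- `[x^−_{α_t,0}, x^−_{α_t,0}] = 0` for `α_t` odd -/
  | oddm (t : Fin (m + n)) (ht : P.par t = true) :
      MRel P (sbr true true (MXm t 0) (MXm t 0)) 0
  /-- `[[x^+_{α_{t−1},0},x^+_{α_t,0}],[x^+_{α_t,0},x^+_{α_{t+1},0}]] = 0` for `α_t` odd -/
  | oddSp (t : Fin (m + n)) (ht : P.par t = true) :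
      MRel P (sbr (xor (P.par (t - 1)) true) (xor true (P.par (t + 1)))
        (sbr (P.par (t - 1)) true (MXp (t - 1) 0) (MXp t 0))
        (sbr true (P.par (t + 1)) (MXp t 0) (MXp (t + 1) 0))) 0
  /-- `[[x^−_{α_{t−1},0},x^−_{α_t,0}],[x^−_{α_t,0},x^−_{α_{t+1},0}]] = 0` for `α_t` odd -/
  | oddSm (t : Fin (m + n)) (ht : P.par t = true) :
      MRel P (sbr (xor (P.par (t - 1)) true) (xor true (P.par (t + 1)))
        (sbr (P.par (t - 1)) true (MXm (t - 1) 0) (MXm t 0))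
        (sbr true (P.par (t + 1)) (MXm t 0) (MXm (t + 1) 0))) 0

/-- The minimalistic affine super Yangian `Y_ℏ(ŝl(m|n,Π))`, presented on the
generators `x^±_{α_i,r}`, `h_{α_i,r}` (`r ∈ {0,1}`) by the minimalistic relations. -/
abbrev Ymin (P : SimpleRootSystem m n) : Type := RingQuot (MRel P)

/-- The canonical projection from the free algebra onto `Y_ℏ(ŝl(m|n,Π))`. -/
def mkY (P : SimpleRootSystem m n) : MFree m n →ₐ[R] Ymin P := RingQuot.mkAlgHom R (MRel P)

/-- The generator `x^+_{α_i,r}` of `Y_ℏ(ŝl(m|n,Π))`. -/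
def xgp (P : SimpleRootSystem m n) (i : Fin (m + n)) (r : Fin 2) : Ymin P := mkY P (MXp i r)

/-- The generator `x^−_{α_i,r}` of `Y_ℏ(ŝl(m|n,Π))`. -/
def xgm (P : SimpleRootSystem m n) (i : Fin (m + n)) (r : Fin 2) : Ymin P := mkY P (MXm i r)

/-- The generator `h_{α_i,r}` of `Y_ℏ(ŝl(m|n,Π))`. -/
def hg (P : SimpleRootSystem m n) (i : Fin (m + n)) (r : Fin 2) : Ymin P := mkY P (MH i r)

/-- The element `h̃_{α_i,1} = h_{α_i,1} − (ℏ/2)h_{α_i,0}²` of `Y_ℏ(ŝl(m|n,Π))`. -/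
def htilY (P : SimpleRootSystem m n) (i : Fin (m + n)) : Ymin P := mkY P (MHt i)

/-- The scalar `a_{i+1,i}⁻¹ ∈ ℂ ⊆ ℂ[ℏ]`. -/
def acoef (P : SimpleRootSystem m n) (i : Fin (m + n)) : R :=
  Polynomial.C (((P.a (i + 1) i : ℤ) : ℂ)⁻¹)

/-- The recursively defined higher generators
`x^+_{α_i,r+1} := a_{i+1,i}⁻¹ [h̃_{α_{i+1},1}, x^+_{α_i,r}]` (`r ≥ 1`). -/
def xpn (P : SimpleRootSystem m n) (i : Fin (m + n)) : ℕ → Ymin P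
  | 0 => xgp P i 0
  | 1 => xgp P i 1
  | r + 2 => acoef P i • sbr false (P.par i) (htilY P (i + 1)) (xpn P i (r + 1))

/-- The recursively defined higher generators
`x^−_{α_i,r+1} := −a_{i+1,i}⁻¹ [h̃_{α_{i+1},1}, x^−_{α_i,r}]` (`r ≥ 1`). -/
def xmn (P : SimpleRootSystem m n) (i : Fin (m + n)) : ℕ → Ymin P
  | 0 => xgm P i 0
  | 1 => xgm P i 1
  | r + 2 => (-acoef P i) • sbr false (P.par i) (htilY P (i + 1)) (xmn P i (r + 1))

/-- The recursively defined higher Cartan generators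
`h_{α_i,r+1} := [x^+_{α_i,r+1}, x^−_{α_i,0}]` (`r ≥ 1`). -/
def hcn (P : SimpleRootSystem m n) (i : Fin (m + n)) : ℕ → Ymin P
  | 0 => hg P i 0
  | 1 => hg P i 1
  | r + 2 => sbr (P.par i) (P.par i) (xpn P i (r + 2)) (xmn P i 0)

end MinDefs

end ASY

namespace ASY

/-!
The elements `h̃_{α_k,1}` commute, so the relation `[h̃_{α_k,1}, x^±_{α_i,0}] = ±a_{ki} x^±_{α_i,1}`
propagates along the recursion to `[h̃_{α_k,1}, x^±_{α_i,r}] = ±a_{ki} x^±_{α_i,r+1}` for all `r`.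
By the Leibniz rule, the derivation `ad h̃_{α_k,1}` then sends a bilinear expression `F r s` in
`x_{α_i,r}` and `x_{α_j,s}` to `±a_{ki} F (r+1) s ± a_{kj} F r (s+1)`.

In a cyclic Dynkin diagram with at least `5` vertices, every vertex `i ≠ j` has a neighbour `k`
with `a_{kj} = 0`. The derivations attached to such a `k` and to its analogue with `i` and `j`
exchanged raise the two indices one at a time, so a relation valid at `(0,0)` holds at all `(r,s)`.

For `i = j`, the elements `[x^+_{α_i,1}, x^-_{α_i,0}] = [x^+_{α_i,0}, x^-_{α_i,1}] = h_{α_i,1}` are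
killed by `ad h̃_{α_{i+1},1}`, which says that the brackets of indices `(2,0)`, `(1,1)` and `(0,2)`
coincide.
-/

attribute [local instance] LieRing.ofAssociativeRing

section RaisedFamilies

variable {S A : Type*} [CommRing S] [Ring A] [Algebra S A]

lemma lie_mul (H x y : A) : ⁅H, x * y⁆ = ⁅H, x⁆ * y + x * ⁅H, y⁆ := by
  simp only [Ring.lie_def]
  noncomm_ring

-- `lie_smul` for the algebra action: the action it is stated for agrees with this one only after
-- unfolding `LieRing.ofAssociativeRing`, so it cannot be used for rewriting.
lemma lie_algebra_smul (c : S) (H x : A) : ⁅H, c • x⁆ = c • ⁅H, x⁆ :=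
  lie_smul c H x

lemma commute_sub_smul_mul_self (c : S) {x y z : A} (hx : Commute x z) (hy : Commute y z) :
    Commute (x - c • (y * y)) z :=
  hx.sub_left ((hy.mul_left hy).smul_left c)

/-- The bilinear product `x * y + c • (y * x)`. It is the super anticommutator for
`c = (−1)^{p(x)p(y)}` and the supercommutator for `c = −(−1)^{p(x)p(y)}`. -/
def twistedMul (c : S) : A →ₗ[S] A →ₗ[S] A :=
  LinearMap.mul S A + c • (LinearMap.mul S A).flip

lemma twistedMul_apply (c : S) (x y : A) : twistedMul c x y = x * y + c • (y * x) :=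
  rfl

lemma lie_twistedMul (c : S) (H x y : A) :
    ⁅H, twistedMul c x y⁆ = twistedMul c ⁅H, x⁆ y + twistedMul c x ⁅H, y⁆ := by
  simp only [twistedMul_apply, lie_add, lie_algebra_smul, lie_mul, smul_add]
  abel

/-- The inner derivation `ad H` shifts the index of the sequence `x` by one, up to the
factor `u`. -/
def IsRaisedBy (H : A) (u : S) (x : ℕ → A) : Prop :=
  ∀ r, ⁅H, x r⁆ = u • x (r + 1)

/-- The inner derivation `ad H` sends `F r s` to a combination of `F (r + 1) s` and
`F r (s + 1)`, with coefficients `u` and `v` independent of `r` and `s`. -/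
def IsBiraisedBy (H : A) (u v : S) (F : ℕ → ℕ → A) : Prop :=
  ∀ r s, ⁅H, F r s⁆ = u • F (r + 1) s + v • F r (s + 1)

namespace IsRaisedBy

variable {H K : A} {u v : S} {x y : ℕ → A}

lemma tail (hx : IsRaisedBy H u x) : IsRaisedBy H u (fun r ↦ x (r + 1)) :=
  fun r ↦ hx (r + 1)

lemma of_commute (hK : IsRaisedBy K v x) (hv : IsUnit v) (hHK : Commute H K)
    (h₀ : ⁅H, x 0⁆ = u • x 1) : IsRaisedBy H u x := by
  intro r
  induction r with
  | zero => exact h₀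
  | succ r ih =>
    refine hv.smul_left_cancel.1 ?_
    calc v • ⁅H, x (r + 1)⁆ = ⁅H, ⁅K, x r⁆⁆ := by rw [hK r, lie_algebra_smul]
      _ = ⁅K, ⁅H, x r⁆⁆ := by rw [leibniz_lie, commute_iff_lie_eq.1 hHK, zero_lie, zero_add]
      _ = v • u • x (r + 2) := by rw [ih, lie_algebra_smul, hK, smul_comm]

lemma twistedMul (c : S) (hx : IsRaisedBy H u x) (hy : IsRaisedBy H v y) :
    IsBiraisedBy H u v (fun r s ↦ twistedMul c (x r) (y s)) := by
  intro r s
  simp only [lie_twistedMul, hx r, hy s, map_smul, LinearMap.smul_apply]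

end IsRaisedBy

namespace IsBiraisedBy

variable {H K : A} {u v : S} {F G : ℕ → ℕ → A}

lemma sub (hF : IsBiraisedBy H u v F) (hG : IsBiraisedBy H u v G) :
    IsBiraisedBy H u v (fun r s ↦ F r s - G r s) := by
  intro r s
  simp only [lie_sub, hF r s, hG r s, smul_sub]
  abel

lemma const_smul (c : S) (hF : IsBiraisedBy H u v F) :
    IsBiraisedBy H u v (fun r s ↦ c • F r s) := by
  intro r s
  simp only [lie_algebra_smul, hF r s, smul_add, smul_comm c]

lemma eq_zero (hH : IsBiraisedBy H u 0 F) (hu : IsUnit u) (hK : IsBiraisedBy K 0 v F)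
    (hv : IsUnit v) (h₀ : F 0 0 = 0) (r s : ℕ) : F r s = 0 := by
  induction s with
  | zero =>
    induction r with
    | zero => exact h₀
    | succ r ih => simpa [ih, hu.smul_eq_zero] using (hH r 0).symm
  | succ s ih => simpa [ih, hv.smul_eq_zero] using (hK r s).symm

lemma raise_left_eq_raise_right (hF : IsBiraisedBy H u (-u) F) (hu : IsUnit u) {r s : ℕ}
    (h : Commute H (F r s)) : F (r + 1) s = F r (s + 1) := by
  have h_sub : u • (F (r + 1) s - F r (s + 1)) = 0 := by
    rw [smul_sub, sub_eq_add_neg, ← neg_smul, ← hF r s, commute_iff_lie_eq.1 h]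
  exact sub_eq_zero.1 (hu.smul_eq_zero.1 h_sub)

end IsBiraisedBy

end RaisedFamilies

section SuperBrackets

variable {A : Type*} [Ring A] [Algebra R A]

lemma sbr_eq_twistedMul (pa pb : Bool) (x y : A) :
    sbr pa pb x y = twistedMul (-sg pa pb) x y := by
  rw [sbr, twistedMul_apply, neg_smul, sub_eq_add_neg]

lemma sac_eq_twistedMul (pa pb : Bool) (x y : A) :
    sac pa pb x y = twistedMul (sg pa pb) x y :=
  rfl

lemma sbr_false_left (p : Bool) (x y : A) : sbr false p x y = ⁅x, y⁆ := by
  simp [sbr, sg, Ring.lie_def]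

/-- The defect `[x_{r+1}, y_s] − [x_r, y_{s+1}] − c {x_r, y_s}` of the mixed relation with
coefficient `c` between two sequences of parities `pa` and `pb`. -/
def mixedDefect (pa pb : Bool) (c : R) (x y : ℕ → A) (r s : ℕ) : A :=
  sbr pa pb (x (r + 1)) (y s) - sbr pa pb (x r) (y (s + 1)) - c • sac pa pb (x r) (y s)

lemma mixedDefect_eq_zero_iff {pa pb : Bool} {c : R} {x y : ℕ → A} {r s : ℕ} :
    mixedDefect pa pb c x y r s = 0 ↔
      sbr pa pb (x (r + 1)) (y s) - sbr pa pb (x r) (y (s + 1))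
        = c • sac pa pb (x r) (y s) :=
  sub_eq_zero

variable {H : A} {u v : R} {x y : ℕ → A}

lemma IsRaisedBy.sbr (pa pb : Bool) (hx : IsRaisedBy H u x) (hy : IsRaisedBy H v y) :
    IsBiraisedBy H u v (fun r s ↦ sbr pa pb (x r) (y s)) := by
  simpa only [sbr_eq_twistedMul] using hx.twistedMul (-sg pa pb) hy

lemma IsRaisedBy.sac (pa pb : Bool) (hx : IsRaisedBy H u x) (hy : IsRaisedBy H v y) :
    IsBiraisedBy H u v (fun r s ↦ sac pa pb (x r) (y s)) := by
  simpa only [sac_eq_twistedMul] using hx.twistedMul (sg pa pb) hy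

lemma IsRaisedBy.mixedDefect (pa pb : Bool) (c : R) (hx : IsRaisedBy H u x)
    (hy : IsRaisedBy H v y) : IsBiraisedBy H u v (mixedDefect pa pb c x y) :=
  ((hx.tail.sbr pa pb hy).sub (hx.sbr pa pb hy.tail)).sub ((hx.sac pa pb hy).const_smul c)

end SuperBrackets

section CartanMatrix

lemma fin_add_nsmul_one_ne_self {N k : ℕ} [NeZero N] (hk : 0 < k) (hkN : k < N) (i : Fin N) :
    i + k • 1 ≠ i := by
  open scoped Fin.CommRing in
  rw [Ne, add_eq_left, nsmul_one, CharP.cast_eq_zero_iff (Fin N) N]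
  exact Nat.not_dvd_of_pos_of_lt hk hkN

namespace SimpleRootSystem

variable {m n : ℕ} (P : SimpleRootSystem m n)

lemma w_ne_zero (k : Fin (m + n)) : P.w k ≠ 0 := by
  unfold w
  split_ifs <;> decide

variable [NeZero (m + n)]

lemma a_eq (i j : Fin (m + n)) :
    P.a i j = P.w i * coeffα j i - P.w (i + 1) * coeffα j (i + 1) := by
  have h_term (k : Fin (m + n)) : P.w k * coeffα i k * coeffα j k
      = (if k = i then P.w k * coeffα j k else 0)
        - (if k = i + 1 then P.w k * coeffα j k else 0) := by
    rw [coeffα]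
    split_ifs <;> ring
  simp only [a, h_term, Finset.sum_sub_distrib, Finset.sum_ite_eq', Finset.mem_univ, if_true]

lemma a_comm (i j : Fin (m + n)) : P.a i j = P.a j i :=
  Finset.sum_congr rfl fun _ _ ↦ mul_right_comm _ _ _

lemma a_eq_zero {i j : Fin (m + n)} (h : i ≠ j) (h_left : i + 1 ≠ j) (h_right : i ≠ j + 1) :
    P.a i j = 0 := by
  simp [a_eq, coeffα, h, h_left, h_right]

lemma a_add_one_left (hN : 3 ≤ m + n) (i : Fin (m + n)) : P.a (i + 1) i = -P.w (i + 1) := by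
  have h_one : i + 1 ≠ i := by
    simpa using fin_add_nsmul_one_ne_self (k := 1) (by omega) (by omega) i
  have h_two : i + 1 + 1 ≠ i := by
    simpa [two_nsmul, add_assoc] using
      fin_add_nsmul_one_ne_self (k := 2) (by omega) (by omega) i
  simp [a_eq, coeffα, h_one, h_two, -add_eq_left]

lemma a_add_one_left_ne_zero (hN : 3 ≤ m + n) (i : Fin (m + n)) : P.a (i + 1) i ≠ 0 := by
  rw [a_add_one_left P hN]
  exact neg_ne_zero.2 (P.w_ne_zero _)

lemma exists_a_ne_zero_and_a_eq_zero (hN : 5 ≤ m + n) {i j : Fin (m + n)} (hij : i ≠ j) :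
    ∃ k, P.a k i ≠ 0 ∧ P.a k j = 0 := by
  by_cases hj : i + 1 = j ∨ i + 1 + 1 = j
  · obtain ⟨k, rfl⟩ : ∃ k, k + 1 = i := ⟨i - 1, sub_add_cancel i 1⟩
    have h_two := fin_add_nsmul_one_ne_self (k := 2) (by omega) (by omega) k
    have h_three := fin_add_nsmul_one_ne_self (k := 3) (by omega) (by omega) k
    have h_four := fin_add_nsmul_one_ne_self (k := 4) (by omega) (by omega) k
    simp only [succ_nsmul, zero_nsmul, zero_add, ← add_assoc] at h_two h_three h_four
    refine ⟨k, P.a_comm k _ ▸ P.a_add_one_left_ne_zero (by omega) k, P.a_eq_zero ?_ hij ?_⟩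
    · rcases hj with rfl | rfl
      exacts [h_two.symm, h_three.symm]
    · rcases hj with rfl | rfl
      exacts [h_three.symm, h_four.symm]
  · obtain ⟨h_one, h_two⟩ := not_or.1 hj
    exact ⟨i + 1, P.a_add_one_left_ne_zero (by omega) i,
      P.a_eq_zero h_one h_two fun h ↦ hij (add_right_cancel h)⟩

end SimpleRootSystem

end CartanMatrix

lemma isUnit_intCast {A : Type*} [Ring A] [Algebra ℚ A] {z : ℤ} (hz : z ≠ 0) :
    IsUnit (z : A) := by
  have hz' : IsUnit (z : ℚ) := by simpa using hz
  simpa using hz'.map (algebraMap ℚ A)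

section Yangian

variable {m n : ℕ} [NeZero (m + n)] (P : SimpleRootSystem m n)

lemma mkY_eq_of_rel {x y : MFree m n} (h : MRel P x y) : mkY P x = mkY P y :=
  RingQuot.mkAlgHom_rel R h

lemma mkY_sbr (pa pb : Bool) (x y : MFree m n) :
    mkY P (sbr pa pb x y) = sbr pa pb (mkY P x) (mkY P y) := by
  simp [sbr]

lemma mkY_sac (pa pb : Bool) (x y : MFree m n) :
    mkY P (sac pa pb x y) = sac pa pb (mkY P x) (mkY P y) := by
  simp [sac]

lemma commute_hg (i j : Fin (m + n)) (r s : Fin 2) : Commute (hg P i r) (hg P j s) := by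
  have h := mkY_eq_of_rel P (.hh i j r s)
  rw [mkY_sbr, sbr_false_left, map_zero] at h
  exact commute_iff_lie_eq.2 h

lemma htilY_eq (i : Fin (m + n)) :
    htilY P i = hg P i 1 - (half * hbar) • (hg P i 0 * hg P i 0) := by
  simp [htilY, MHt, hg]

lemma commute_htilY_hg (i j : Fin (m + n)) (s : Fin 2) : Commute (htilY P i) (hg P j s) := by
  rw [htilY_eq]
  exact commute_sub_smul_mul_self (A := Ymin P) _ (commute_hg P i j 1 s) (commute_hg P i j 0 s)

lemma commute_htilY (i j : Fin (m + n)) : Commute (htilY P i) (htilY P j) := by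
  rw [htilY_eq P i]
  exact commute_sub_smul_mul_self (A := Ymin P) _ (commute_htilY_hg P j i 1).symm
    (commute_htilY_hg P j i 0).symm

lemma lie_htilY_xpn_zero (k i : Fin (m + n)) :
    ⁅htilY P k, xpn P i 0⁆ = (P.a k i : R) • xpn P i 1 := by
  have h := mkY_eq_of_rel P (.htxp k i)
  rwa [mkY_sbr, sbr_false_left, map_smul] at h

lemma lie_htilY_xmn_zero (k i : Fin (m + n)) :
    ⁅htilY P k, xmn P i 0⁆ = (-(P.a k i : R)) • xmn P i 1 := by
  have h := mkY_eq_of_rel P (.htxm k i)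
  rwa [mkY_sbr, sbr_false_left, map_smul] at h

lemma sbr_xpn_zero_xmn_zero (i j : Fin (m + n)) :
    sbr (P.par i) (P.par j) (xpn P i 0) (xmn P j 0) = if i = j then hcn P i 0 else 0 := by
  have h := mkY_eq_of_rel P (.pm00 i j)
  rwa [mkY_sbr, apply_ite (mkY P), map_zero] at h

lemma sbr_xpn_one_xmn_zero (i j : Fin (m + n)) :
    sbr (P.par i) (P.par j) (xpn P i 1) (xmn P j 0) = if i = j then hcn P i 1 else 0 := by
  have h := mkY_eq_of_rel P (.pm10 i j)
  rwa [mkY_sbr, apply_ite (mkY P), map_zero] at h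

lemma sbr_xpn_zero_xmn_one (i j : Fin (m + n)) :
    sbr (P.par i) (P.par j) (xpn P i 0) (xmn P j 1) = if i = j then hcn P i 1 else 0 := by
  have h := mkY_eq_of_rel P (.pm01 i j)
  rwa [mkY_sbr, apply_ite (mkY P), map_zero] at h

lemma mixedDefect_xpn_zero_zero (i j : Fin (m + n)) :
    mixedDefect (P.par i) (P.par j) (half * hbar * (P.a i j : R)) (xpn P i) (xpn P j) 0 0 = 0 := by
  have h := mkY_eq_of_rel P (.mixp i j)
  rw [map_sub, map_smul, mkY_sbr, mkY_sbr, mkY_sac] at h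
  exact mixedDefect_eq_zero_iff.2 h

lemma mixedDefect_xmn_zero_zero (i j : Fin (m + n)) :
    mixedDefect (P.par i) (P.par j) (-(half * hbar * (P.a i j : R))) (xmn P i) (xmn P j) 0 0
      = 0 := by
  have h := mkY_eq_of_rel P (.mixm i j)
  rw [map_sub, map_smul, mkY_sbr, mkY_sbr, mkY_sac] at h
  exact mixedDefect_eq_zero_iff.2 h

lemma a_mul_acoef (hN : 3 ≤ m + n) (i : Fin (m + n)) : (P.a (i + 1) i : R) * acoef P i = 1 := by
  have ha : (P.a (i + 1) i : ℂ) ≠ 0 := Int.cast_ne_zero.2 (P.a_add_one_left_ne_zero hN i)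
  rw [acoef, ← Polynomial.C_eq_intCast, ← Polynomial.C_mul, mul_inv_cancel₀ ha, Polynomial.C_1]

lemma isRaisedBy_htilY_xpn (hN : 3 ≤ m + n) (k i : Fin (m + n)) :
    IsRaisedBy (htilY P k) (P.a k i : R) (xpn P i) := by
  have h_next : IsRaisedBy (htilY P (i + 1)) (P.a (i + 1) i : R) (xpn P i)
    | 0 => lie_htilY_xpn_zero P (i + 1) i
    | r + 1 => by rw [xpn, smul_smul, a_mul_acoef P hN, one_smul, sbr_false_left]
  exact h_next.of_commute (isUnit_intCast (P.a_add_one_left_ne_zero hN i))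
    (commute_htilY P k (i + 1)) (lie_htilY_xpn_zero P k i)

lemma isRaisedBy_htilY_xmn (hN : 3 ≤ m + n) (k i : Fin (m + n)) :
    IsRaisedBy (htilY P k) (-(P.a k i : R)) (xmn P i) := by
  have h_next : IsRaisedBy (htilY P (i + 1)) (-(P.a (i + 1) i : R)) (xmn P i)
    | 0 => lie_htilY_xmn_zero P (i + 1) i
    | r + 1 => by rw [xmn, smul_smul, neg_mul_neg, a_mul_acoef P hN, one_smul, sbr_false_left]
  exact h_next.of_commute (isUnit_intCast (P.a_add_one_left_ne_zero hN i)).neg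
    (commute_htilY P k (i + 1)) (lie_htilY_xmn_zero P k i)

variable {P} in
lemma eq_zero_of_isBiraisedBy_htilY (hN : 5 ≤ m + n) {i j : Fin (m + n)} (hij : i ≠ j) {u v : R}
    (hu : IsUnit u) (hv : IsUnit v) {F : ℕ → ℕ → Ymin P}
    (hF : ∀ k, IsBiraisedBy (htilY P k) (u * P.a k i) (v * P.a k j) F) (h₀ : F 0 0 = 0)
    (r s : ℕ) : F r s = 0 := by
  obtain ⟨k, hki, hkj⟩ := P.exists_a_ne_zero_and_a_eq_zero hN hij
  obtain ⟨l, hlj, hli⟩ := P.exists_a_ne_zero_and_a_eq_zero hN hij.symm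
  have h_left : IsBiraisedBy (htilY P k) (u * P.a k i) 0 F := by simpa [hkj] using hF k
  have h_right : IsBiraisedBy (htilY P l) 0 (v * P.a l j) F := by simpa [hli] using hF l
  exact h_left.eq_zero (hu.mul (isUnit_intCast hki)) h_right (hv.mul (isUnit_intCast hlj)) h₀ r s

lemma sbr_xpn_xmn_of_ne (hN : 5 ≤ m + n) {i j : Fin (m + n)} (hij : i ≠ j) (r s : ℕ) :
    sbr (P.par i) (P.par j) (xpn P i r) (xmn P j s) = 0 := by
  refine eq_zero_of_isBiraisedBy_htilY hN hij isUnit_one isUnit_one.neg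
    (F := fun r s ↦ sbr (P.par i) (P.par j) (xpn P i r) (xmn P j s)) (fun k ↦ ?_) ?_ r s
  · simpa using (isRaisedBy_htilY_xpn P (by omega) k i).sbr (P.par i) (P.par j)
      (isRaisedBy_htilY_xmn P (by omega) k j)
  · simpa [hij] using sbr_xpn_zero_xmn_zero P i j

lemma mixedDefect_xpn (hN : 5 ≤ m + n) {i j : Fin (m + n)} (hij : i ≠ j) (r s : ℕ) :
    mixedDefect (P.par i) (P.par j) (half * hbar * (P.a i j : R)) (xpn P i) (xpn P j) r s = 0 := by
  refine eq_zero_of_isBiraisedBy_htilY hN hij isUnit_one isUnit_one (fun k ↦ ?_)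
    (mixedDefect_xpn_zero_zero P i j) r s
  simpa using (isRaisedBy_htilY_xpn P (by omega) k i).mixedDefect (P.par i) (P.par j) _
    (isRaisedBy_htilY_xpn P (by omega) k j)

lemma mixedDefect_xmn (hN : 5 ≤ m + n) {i j : Fin (m + n)} (hij : i ≠ j) (r s : ℕ) :
    mixedDefect (P.par i) (P.par j) (-(half * hbar * (P.a i j : R))) (xmn P i) (xmn P j) r s
      = 0 := by
  refine eq_zero_of_isBiraisedBy_htilY hN hij isUnit_one.neg isUnit_one.neg (fun k ↦ ?_)
    (mixedDefect_xmn_zero_zero P i j) r s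
  simpa using (isRaisedBy_htilY_xmn P (by omega) k i).mixedDefect (P.par i) (P.par j) _
    (isRaisedBy_htilY_xmn P (by omega) k j)

lemma sbr_xpn_succ_xmn_eq_sbr_xpn_xmn_succ (hN : 3 ≤ m + n) (i : Fin (m + n)) {r s : ℕ}
    (h : sbr (P.par i) (P.par i) (xpn P i r) (xmn P i s) = hcn P i 1) :
    sbr (P.par i) (P.par i) (xpn P i (r + 1)) (xmn P i s)
      = sbr (P.par i) (P.par i) (xpn P i r) (xmn P i (s + 1)) := by
  refine ((isRaisedBy_htilY_xpn P hN (i + 1) i).sbr (P.par i) (P.par i)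
    (isRaisedBy_htilY_xmn P hN (i + 1) i)).raise_left_eq_raise_right
    (isUnit_intCast (P.a_add_one_left_ne_zero hN i)) ?_
  rw [h]
  exact commute_htilY_hg P (i + 1) i 1

lemma sbr_xpn_xmn_self (hN : 3 ≤ m + n) (i : Fin (m + n)) {r s : ℕ} (hrs : r + s ≤ 2) :
    sbr (P.par i) (P.par i) (xpn P i r) (xmn P i s) = hcn P i (r + s) := by
  have h₀₀ := (sbr_xpn_zero_xmn_zero P i i).trans (if_pos rfl)
  have h₁₀ := (sbr_xpn_one_xmn_zero P i i).trans (if_pos rfl)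
  have h₀₁ := (sbr_xpn_zero_xmn_one P i i).trans (if_pos rfl)
  have h₂₀ : sbr (P.par i) (P.par i) (xpn P i 2) (xmn P i 0) = hcn P i 2 := rfl
  have h₁₁ : sbr (P.par i) (P.par i) (xpn P i 1) (xmn P i 1) = hcn P i 2 :=
    (sbr_xpn_succ_xmn_eq_sbr_xpn_xmn_succ P hN i h₁₀).symm.trans h₂₀
  have h₀₂ : sbr (P.par i) (P.par i) (xpn P i 0) (xmn P i 2) = hcn P i 2 :=
    (sbr_xpn_succ_xmn_eq_sbr_xpn_xmn_succ P hN i h₀₁).symm.trans h₁₁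
  obtain ⟨hr, hs⟩ : r ≤ 2 ∧ s ≤ 2 := by omega
  interval_cases r <;> interval_cases s <;> first | assumption | omega

end Yangian

theorem higher_pairing_and_mixed_relations_general (m n : ℕ) [NeZero (m + n)]
    (hN : 5 ≤ m + n) (P : SimpleRootSystem m n) :
    (∀ (i : Fin (m + n)) (r s : ℕ), r + s ≤ 2 →
      sbr (P.par i) (P.par i) (xpn P i r) (xmn P i s) = hcn P i (r + s)) ∧
    (∀ (i j : Fin (m + n)), i ≠ j → ∀ r s : ℕ,
      sbr (P.par i) (P.par j) (xpn P i r) (xmn P j s) = 0 ∧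
      sbr (P.par i) (P.par j) (xpn P i (r + 1)) (xpn P j s)
          - sbr (P.par i) (P.par j) (xpn P i r) (xpn P j (s + 1))
        = (half * hbar * ((P.a i j : ℤ) : R)) •
            sac (P.par i) (P.par j) (xpn P i r) (xpn P j s) ∧
      sbr (P.par i) (P.par j) (xmn P i (r + 1)) (xmn P j s)
          - sbr (P.par i) (P.par j) (xmn P i r) (xmn P j (s + 1))
        = (-(half * hbar * ((P.a i j : ℤ) : R))) •
            sac (P.par i) (P.par j) (xmn P i r) (xmn P j s)) :=
  ⟨fun i _ _ hrs ↦ sbr_xpn_xmn_self P (by omega) i hrs, fun _ _ hij r s ↦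
    ⟨sbr_xpn_xmn_of_ne P hN hij r s,
      mixedDefect_eq_zero_iff.1 (mixedDefect_xpn P hN hij r s),
      mixedDefect_eq_zero_iff.1 (mixedDefect_xmn P hN hij r s)⟩⟩

/-- In the minimalistic affine super Yangian `Y_ℏ(ŝl(m|n,Π))` with
recursively defined higher generators: (1) `[x^+_{α_i,r}, x^−_{α_i,s}] = h_{α_i,r+s}` holds
for all `i` whenever `r + s ≤ 2`; (2) for `i ≠ j` and all `r, s ≥ 0`,
`[x^+_{α_i,r}, x^−_{α_j,s}] = 0` and
`[x^±_{α_i,r+1}, x^±_{α_j,s}] − [x^±_{α_i,r}, x^±_{α_j,s+1}]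
  = ±(ℏ a_{ij}/2){x^±_{α_i,r}, x^±_{α_j,s}}`. -/
theorem higher_pairing_and_mixed_relations (m n : ℕ) [NeZero (m + n)]
    (hm : 2 ≤ m) (hn : 2 ≤ n) (hmn : m ≠ n)
    (P : SimpleRootSystem m n) :
    (∀ (i : Fin (m + n)) (r s : ℕ), r + s ≤ 2 →
      sbr (P.par i) (P.par i) (xpn P i r) (xmn P i s) = hcn P i (r + s)) ∧
    (∀ (i j : Fin (m + n)), i ≠ j → ∀ r s : ℕ,
      sbr (P.par i) (P.par j) (xpn P i r) (xmn P j s) = 0 ∧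
      sbr (P.par i) (P.par j) (xpn P i (r + 1)) (xpn P j s)
          - sbr (P.par i) (P.par j) (xpn P i r) (xpn P j (s + 1))
        = (half * hbar * ((P.a i j : ℤ) : R)) •
            sac (P.par i) (P.par j) (xpn P i r) (xpn P j s) ∧
      sbr (P.par i) (P.par j) (xmn P i (r + 1)) (xmn P j s)
          - sbr (P.par i) (P.par j) (xmn P i r) (xmn P j (s + 1))
        = (-(half * hbar * ((P.a i j : ℤ) : R))) •
            sac (P.par i) (P.par j) (xmn P i r) (xmn P j s)) := by
  exact higher_pairing_and_mixed_relations_general m n (by omega) P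

end ASY
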